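/- Schwarz–Christoffel map for a rectangle: fix k ∈ (0,1) and let ψ(z) = ∫₀^z dt/√((1−t²)(1−k²t²)), defined for z in the closed upper half-plane by integrating along paths in the closed upper half-plane (with the branch of the square root that is positive on (−1,1)). Then ψ is continuous on the closed upper half-plane, holomorphic and injective on the open upper half-plane ℍ, maps ℍ conformally onto the open rectangle R(k) with corners ±K(k²) and ±K(k²)+iK(1−k²) (i.e., {x+iy : −K(k²)<x<K(k²), 0<y<K(1−k²)}), and satisfies ψ(−1/k) = −K(k²)+iK(1−k²), ψ(−1) = −K(k²), ψ(1) = K(k²), ψ(1/k) = K(k²)+iK(1−k²). -/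

import Mathlib

open MeasureTheory Filter Topology

noncomputable section

/-- The complete elliptic integral of the first kind,
`K(u) = ∫₀¹ dt / √((1 − t²)(1 − u t²))`. -/
def ellipticK (u : ℝ) : ℝ :=
  ∫ t in (0 : ℝ)..1, 1 / Real.sqrt ((1 - t ^ 2) * (1 - u * t ^ 2))

namespace SchwarzChristoffel

/-- The modulus of the elliptic integrand on the real line. -/
def ellipticDensity (k t : ℝ) : ℝ := 1 / √|(1 - t ^ 2) * (1 - k ^ 2 * t ^ 2)|

lemma ellipticDensity_nonneg (k t : ℝ) : 0 ≤ ellipticDensity k t := by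
  unfold ellipticDensity; positivity

lemma measurable_ellipticDensity (k : ℝ) : Measurable (ellipticDensity k) := by
  unfold ellipticDensity; fun_prop

lemma intervalIntegrable_inv_sqrt_abs (a b : ℝ) :
    IntervalIntegrable (fun t : ℝ => 1 / √|t|) volume a b := by
  have h : ∀ a b : ℝ, IntervalIntegrable (fun t : ℝ => t ^ (-(1 / 2) : ℝ)) volume a b :=
    fun a b => intervalIntegral.intervalIntegrable_rpow' (by norm_num)
  have h2 : IntervalIntegrable (fun t : ℝ => (-t) ^ (-(1 / 2) : ℝ)) volume a b := by
    simpa using (IntervalIntegrable.iff_comp_neg (by simp)).1 (h (-a) (-b))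
  refine (((h a b).norm).add h2.norm).mono_fun'
    (by measurability) (Eventually.of_forall fun t => ?_)
  have key : ∀ s : ℝ, 0 ≤ s → 1 / √s = s ^ (-(1 / 2) : ℝ) := fun s hs => by
    rw [Real.rpow_neg hs, Real.sqrt_eq_rpow, one_div]
  beta_reduce
  rw [Real.norm_of_nonneg (by positivity)]
  rcases le_total 0 t with ht | ht
  · rw [abs_of_nonneg ht, key t ht]
    exact (le_abs_self _).trans (le_add_of_nonneg_right (norm_nonneg _))
  · rw [abs_of_nonpos ht, key (-t) (by linarith)]
    exact (le_abs_self _).trans (le_add_of_nonneg_left (norm_nonneg _))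

lemma ellipticDensity_le {k t : ℝ} (hk : 0 < k) (hk1 : k < 1) (ht : 0 ≤ t) :
    ellipticDensity k t ≤ (1 / √(1 - k)) * (1 / √|t - 1| + 1 / √|k * t - 1|) := by
  have h0 : 0 < √(1 - k) := Real.sqrt_pos.2 (by linarith)
  by_cases h1 : t - 1 = 0
  · have : ellipticDensity k t = 0 := by
      have : t = 1 := by linarith
      simp [ellipticDensity, this]
    rw [this]; positivity
  by_cases h2 : k * t - 1 = 0
  · have : ellipticDensity k t = 0 := by
      have : (1 - k ^ 2 * t ^ 2) = 0 := by linear_combination -(k * t + 1) * h2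
      simp [ellipticDensity, this]
    rw [this]; positivity
  have p1 : 0 < √|t - 1| := Real.sqrt_pos.2 (abs_pos.2 h1)
  have p2 : 0 < √|k * t - 1| := Real.sqrt_pos.2 (abs_pos.2 h2)
  have hle : √|t - 1| * √|k * t - 1| ≤ √|(1 - t ^ 2) * (1 - k ^ 2 * t ^ 2)| := by
    rw [← Real.sqrt_mul (abs_nonneg _), ← abs_mul]
    apply Real.sqrt_le_sqrt
    have : (1 - t ^ 2) * (1 - k ^ 2 * t ^ 2) =
        ((t - 1) * (k * t - 1)) * ((t + 1) * (k * t + 1)) := by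
      ring
    rw [this, abs_mul ((t - 1) * (k * t - 1))]
    refine le_mul_of_one_le_right (abs_nonneg _) ?_
    have : 0 ≤ k * t := by positivity
    rw [abs_of_nonneg (by positivity)]
    nlinarith [mul_nonneg ht this]
  have hsum : √(1 - k) ≤ √|t - 1| + √|k * t - 1| := by
    refine Real.sqrt_le_iff.2 ⟨by positivity, ?_⟩
    have e1 := Real.sq_sqrt (abs_nonneg (t - 1))
    have e2 := Real.sq_sqrt (abs_nonneg (k * t - 1))
    have : 1 - k ≤ |t - 1| + |k * t - 1| := by
      rcases abs_cases (t - 1) with h | h <;> rcases abs_cases (k * t - 1) with h' | h' <;>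
        nlinarith
    nlinarith [mul_pos p1 p2]
  calc ellipticDensity k t ≤ 1 / (√|t - 1| * √|k * t - 1|) :=
        one_div_le_one_div_of_le (by positivity) hle
    _ ≤ _ := by
        rw [div_add_div _ _ p1.ne' p2.ne', div_mul_div_comm, div_le_div_iff₀ (by positivity)
          (by positivity)]
        nlinarith [mul_pos p1 p2, mul_le_mul_of_nonneg_right hsum (mul_pos p1 p2).le]

lemma intervalIntegrable_ellipticDensity {k : ℝ} (hk : 0 < k) (hk1 : k < 1) {a b : ℝ}
    (ha : 0 ≤ a) (hb : 0 ≤ b) : IntervalIntegrable (ellipticDensity k) volume a b := by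
  have h1 : IntervalIntegrable (fun t : ℝ => 1 / √|t - 1|) volume a b := by
    simpa using (intervalIntegrable_inv_sqrt_abs (a - 1) (b - 1)).comp_sub_right 1
  have h2 : IntervalIntegrable (fun t : ℝ => 1 / √|k * t - 1|) volume a b := by
    have := ((intervalIntegrable_inv_sqrt_abs (k * a - 1)
      (k * b - 1)).comp_sub_right 1).comp_mul_left (c := k)
    simpa [hk.ne'] using this
  refine ((h1.add h2).const_mul (1 / √(1 - k))).mono_fun'
    (measurable_ellipticDensity k).aestronglyMeasurable ?_
  refine (ae_restrict_iff' measurableSet_uIoc).2 (Eventually.of_forall fun t ht => ?_)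
  have ht0 : 0 ≤ t := (le_min ha hb).trans ht.1.le
  beta_reduce
  rw [Real.norm_of_nonneg (ellipticDensity_nonneg k t)]
  exact ellipticDensity_le hk hk1 ht0

lemma integral_ellipticDensity_zero_one {k : ℝ} (hk : 0 < k) (hk1 : k < 1) :
    ∫ t in (0 : ℝ)..1, ellipticDensity k t = ellipticK (k ^ 2) := by
  refine intervalIntegral.integral_congr fun t ht => ?_
  rw [Set.uIcc_of_le zero_le_one] at ht
  have h1 : 0 ≤ 1 - t ^ 2 := by nlinarith [ht.1, ht.2]
  have h2 : 0 ≤ 1 - k ^ 2 * t ^ 2 := by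
    nlinarith [mul_le_one₀ hk1.le ht.1 ht.2, mul_nonneg hk.le ht.1]
  simp only [ellipticDensity]
  rw [abs_of_nonneg (mul_nonneg h1 h2)]

lemma integral_ellipticDensity_one_inv {k : ℝ} (hk : 0 < k) (hk1 : k < 1) :
    ∫ t in (1 : ℝ)..1 / k, ellipticDensity k t = ellipticK (1 - k ^ 2) := by
  have hk2 : 0 < 1 - k ^ 2 := by nlinarith
  have hk3 : 0 < k ^ 2 := by positivity
  let d : ℝ → ℝ := fun s => 1 - (1 - k ^ 2) * s ^ 2
  let φ : ℝ → ℝ := fun s => (√(d s))⁻¹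
  have hd : ∀ s ∈ Set.Ioo (0 : ℝ) 1, k ^ 2 < d s ∧ d s < 1 := fun s hs => by
    have h1 : 0 < s ^ 2 := pow_pos hs.1 2
    have h2 : s ^ 2 < 1 := by nlinarith [hs.1, hs.2]
    constructor <;> simp only [d] <;> nlinarith
  have himg : φ '' Set.Ioo 0 1 = Set.Ioo 1 (1 / k) := by
    ext t
    constructor
    · rintro ⟨s, hs, rfl⟩
      obtain ⟨h1, h2⟩ := hd s hs
      have h3 : k < √(d s) := Real.lt_sqrt_of_sq_lt h1
      refine ⟨(one_lt_inv₀ (hk.trans h3)).2 (Real.sqrt_lt' one_pos |>.2 (by simpa using h2)), ?_⟩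
      rw [one_div]
      exact inv_strictAnti₀ hk h3
    · rintro ⟨h1, h2⟩
      have ht : 0 < t := by linarith
      rw [lt_div_iff₀ hk] at h2
      have h3 : 1 < t ^ 2 := by nlinarith
      have h4 : t ^ 2 * k ^ 2 < 1 := by nlinarith [mul_pos ht hk]
      have h5 : (t ^ 2)⁻¹ < 1 := inv_lt_one_of_one_lt₀ h3
      have h6 : k ^ 2 < (t ^ 2)⁻¹ := by
        rwa [lt_inv_comm₀ hk3 (by positivity), lt_inv_comm₀ (by positivity) hk3, ← one_div,
          lt_div_iff₀ (by positivity), mul_comm]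
      have h7 : 0 < (1 - (t ^ 2)⁻¹) / (1 - k ^ 2) := div_pos (by linarith) hk2
      refine ⟨√((1 - (t ^ 2)⁻¹) / (1 - k ^ 2)), ⟨Real.sqrt_pos.2 h7, ?_⟩, ?_⟩
      · rw [Real.sqrt_lt' one_pos, one_pow, div_lt_one hk2]; linarith
      · simp only [φ, d]
        rw [Real.sq_sqrt h7.le, mul_div_cancel₀ _ hk2.ne']
        rw [sub_sub_cancel, Real.sqrt_inv, Real.sqrt_sq ht.le, inv_inv]
  have hderiv : ∀ s ∈ Set.Ioo (0 : ℝ) 1,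
      HasDerivAt φ ((1 - k ^ 2) * s / (d s * √(d s))) s := fun s hs => by
    have h0 : 0 < d s := hk3.trans (hd s hs).1
    have h1 : HasDerivAt d (-((1 - k ^ 2) * (2 * s))) s := by
      simpa using ((hasDerivAt_pow 2 s).const_mul (1 - k ^ 2)).const_sub 1
    have h2 := (h1.sqrt h0.ne').inv (Real.sqrt_pos.2 h0).ne'
    refine h2.congr_deriv ?_
    rw [Real.sq_sqrt h0.le]
    have := (Real.sqrt_pos.2 h0).ne'
    field_simp
  have hinj : Set.InjOn φ (Set.Ioo 0 1) := fun s hs s' hs' h => by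
    have h1 := (hk3.trans (hd s hs).1).le
    have h2 := (hk3.trans (hd s' hs').1).le
    have h3 : d s = d s' := (Real.sqrt_inj h1 h2).1 (inv_injective h)
    have h4 : s ^ 2 = s' ^ 2 := by
      have : (1 - k ^ 2) * (s ^ 2 - s' ^ 2) = 0 := by simp only [d] at h3; linarith
      rcases mul_eq_zero.1 this with h | h <;> linarith
    exact (pow_left_inj₀ hs.1.le hs'.1.le two_ne_zero).1 h4
  have hle : (1 : ℝ) ≤ 1 / k := by rw [le_div_iff₀ hk]; linarith
  rw [intervalIntegral.integral_of_le hle, integral_Ioc_eq_integral_Ioo, ← himg,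
    integral_image_eq_integral_abs_deriv_smul measurableSet_Ioo
      (fun s hs => (hderiv s hs).hasDerivWithinAt) hinj, ellipticK,
    intervalIntegral.integral_of_le zero_le_one, integral_Ioc_eq_integral_Ioo]
  refine setIntegral_congr_fun measurableSet_Ioo fun s hs => ?_
  obtain ⟨h1, h2⟩ := hd s hs
  have h0 : 0 < d s := hk3.trans h1
  have hs2 : 0 < 1 - s ^ 2 := by nlinarith [hs.1, hs.2]
  have hr := Real.sqrt_pos.2 h0
  have hr2 := Real.sqrt_pos.2 hs2
  have e : |(1 - φ s ^ 2) * (1 - k ^ 2 * φ s ^ 2)| =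
      ((1 - k ^ 2) * s / d s) ^ 2 * (1 - s ^ 2) := by
    have h3 : φ s ^ 2 = (d s)⁻¹ := by simp only [φ]; rw [inv_pow, Real.sq_sqrt h0.le]
    have h4 : (1 - φ s ^ 2) * (1 - k ^ 2 * φ s ^ 2) =
        -(((1 - k ^ 2) * s / d s) ^ 2 * (1 - s ^ 2)) := by
      rw [h3]; field_simp; simp only [d]; ring
    rw [h4, abs_neg, abs_of_nonneg (by positivity)]
  have hs0 := hs.1
  simp only [ellipticDensity, smul_eq_mul]
  rw [e, Real.sqrt_mul (by positivity), Real.sqrt_sq (by positivity), Real.sqrt_mul hs2.le,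
    abs_of_nonneg (by positivity)]
  change _ = 1 / (_ * √(d s))
  field_simp

/-- The square root on the closed upper half-plane with values in the closed first quadrant. -/
def upperSqrt (w : ℂ) : ℂ :=
  (√((‖w‖ + w.re) / 2) : ℝ) + (√((‖w‖ - w.re) / 2) : ℝ) * Complex.I

lemma continuous_upperSqrt : Continuous upperSqrt := by
  unfold upperSqrt; fun_prop

lemma upperSqrt_sq {w : ℂ} (hw : 0 ≤ w.im) : upperSqrt w ^ 2 = w := by
  have h1 : 0 ≤ (‖w‖ + w.re) / 2 := by
    linarith [neg_abs_le w.re, Complex.abs_re_le_norm w]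
  have h2 : 0 ≤ (‖w‖ - w.re) / 2 := by
    linarith [le_abs_self w.re, Complex.abs_re_le_norm w]
  have h3 : √((‖w‖ + w.re) / 2) * √((‖w‖ - w.re) / 2) = w.im / 2 := by
    rw [← Real.sqrt_mul h1, ← Real.sqrt_sq (by linarith : 0 ≤ w.im / 2)]
    congr 1
    have := Complex.sq_norm w
    rw [Complex.normSq_apply] at this
    linear_combination this / 4
  have e1 := Real.sq_sqrt h1
  have e2 := Real.sq_sqrt h2
  rw [upperSqrt, pow_two]
  generalize √((‖w‖ + w.re) / 2) = a at *
  generalize √((‖w‖ - w.re) / 2) = b at *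
  apply Complex.ext
  · simp
    linarith
  · simp
    linarith

lemma upperSqrt_ofReal_of_nonneg {x : ℝ} (hx : 0 ≤ x) : upperSqrt x = (√x : ℝ) := by
  simp [upperSqrt, abs_of_nonneg hx]

lemma upperSqrt_ofReal_of_nonpos {x : ℝ} (hx : x ≤ 0) :
    upperSqrt x = (√(-x) : ℝ) * Complex.I := by
  have : (-x - x) / 2 = -x := by ring
  simp [upperSqrt, abs_of_nonpos hx, this]

/-- An explicit branch of `√((1-z²)(1-k²z²))` on the closed upper half-plane. -/
def ellipticBranch (k : ℝ) (z : ℂ) : ℂ :=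
  -(upperSqrt (z - 1) * upperSqrt (z + 1) * upperSqrt (k * z - 1) * upperSqrt (k * z + 1))

lemma continuous_ellipticBranch (k : ℝ) : Continuous (ellipticBranch k) := by
  have := continuous_upperSqrt
  unfold ellipticBranch; fun_prop

lemma ellipticBranch_sq {k : ℝ} (hk : 0 < k) {z : ℂ} (hz : 0 ≤ z.im) :
    ellipticBranch k z ^ 2 = (1 - z ^ 2) * (1 - (k : ℂ) ^ 2 * z ^ 2) := by
  have hkz : 0 ≤ k * z.im := by positivity
  rw [ellipticBranch, neg_sq, mul_pow, mul_pow, mul_pow, upperSqrt_sq (by simpa),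
    upperSqrt_sq (by simpa), upperSqrt_sq (by simpa), upperSqrt_sq (by simpa)]
  ring

lemma ellipticBranch_ofReal_of_mem_Icc_zero_one {k x : ℝ} (hk : 0 < k) (hk1 : k < 1) (hx : 0 ≤ x)
    (hx1 : x ≤ 1) : ellipticBranch k x = (√|(1 - x ^ 2) * (1 - k ^ 2 * x ^ 2)| : ℝ) := by
  have hkx : 0 ≤ k * x := by positivity
  have hkx1 : k * x ≤ 1 := mul_le_one₀ hk1.le hx hx1
  have e : (1 - x ^ 2) * (1 - k ^ 2 * x ^ 2) =
      -(x - 1) * (x + 1) * -(k * x - 1) * (k * x + 1) := by ring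
  have a1 : 0 ≤ -(x - 1) := by linarith
  have a2 : 0 ≤ x + 1 := by linarith
  have a3 : 0 ≤ -(k * x - 1) := by linarith
  have a4 : 0 ≤ k * x + 1 := by linarith
  have c1 : ((x : ℂ) - 1) = ((x - 1 : ℝ) : ℂ) := by push_cast; ring
  have c2 : ((x : ℂ) + 1) = ((x + 1 : ℝ) : ℂ) := by push_cast; ring
  have c3 : ((k : ℂ) * x - 1) = ((k * x - 1 : ℝ) : ℂ) := by push_cast; ring
  have c4 : ((k : ℂ) * x + 1) = ((k * x + 1 : ℝ) : ℂ) := by push_cast; ring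
  rw [ellipticBranch, c1, c2, c3, c4, upperSqrt_ofReal_of_nonpos (by linarith),
    upperSqrt_ofReal_of_nonneg a2, upperSqrt_ofReal_of_nonpos (by linarith),
    upperSqrt_ofReal_of_nonneg a4, abs_of_nonneg (by rw [e]; positivity), e,
    Real.sqrt_mul (by positivity), Real.sqrt_mul (by positivity), Real.sqrt_mul (by positivity)]
  push_cast
  linear_combination -(√(-(x - 1)) * √(x + 1) * √(-(k * x - 1)) * √(k * x + 1) : ℂ) * Complex.I_sq

lemma ellipticBranch_ofReal_of_mem_Icc_one_inv {k x : ℝ} (hk : 0 < k) (hx : 1 ≤ x)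
    (hkx1 : k * x ≤ 1) :
    ellipticBranch k x = -(√|(1 - x ^ 2) * (1 - k ^ 2 * x ^ 2)| : ℝ) * Complex.I := by
  have hkx : 0 ≤ k * x := by positivity
  have e : (1 - x ^ 2) * (1 - k ^ 2 * x ^ 2) =
      -((x - 1) * (x + 1) * -(k * x - 1) * (k * x + 1)) := by ring
  have a1 : 0 ≤ x - 1 := by linarith
  have a2 : 0 ≤ x + 1 := by linarith
  have a3 : 0 ≤ -(k * x - 1) := by linarith
  have a4 : 0 ≤ k * x + 1 := by linarith
  have c1 : ((x : ℂ) - 1) = ((x - 1 : ℝ) : ℂ) := by push_cast; ring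
  have c2 : ((x : ℂ) + 1) = ((x + 1 : ℝ) : ℂ) := by push_cast; ring
  have c3 : ((k : ℂ) * x - 1) = ((k * x - 1 : ℝ) : ℂ) := by push_cast; ring
  have c4 : ((k : ℂ) * x + 1) = ((k * x + 1 : ℝ) : ℂ) := by push_cast; ring
  rw [ellipticBranch, c1, c2, c3, c4, upperSqrt_ofReal_of_nonneg a1,
    upperSqrt_ofReal_of_nonneg a2, upperSqrt_ofReal_of_nonpos (by linarith),
    upperSqrt_ofReal_of_nonneg a4, e, abs_neg, abs_of_nonneg (by positivity),
    Real.sqrt_mul (by positivity), Real.sqrt_mul (by positivity), Real.sqrt_mul (by positivity)]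
  push_cast
  ring

lemma isPreconnected_of_subset_closedUpper {S : Set ℂ} (h1 : {z : ℂ | 0 < z.im} ⊆ S)
    (h2 : S ⊆ {z : ℂ | 0 ≤ z.im}) : IsPreconnected S :=
  (convex_halfSpace_im_gt 0).isPreconnected.subset_closure h1
    (by rwa [Complex.closure_setOfPred_lt_im])

lemma one_sub_sq_mul_one_sub_sq_ne_zero {k : ℝ} (hk : 0 < k) {z : ℂ}
    (hz : z ∉ ({1, -1, (1 : ℂ) / k, -(1 : ℂ) / k} : Set ℂ)) :
    (1 - z ^ 2) * (1 - (k : ℂ) ^ 2 * z ^ 2) ≠ 0 := by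
  have hk' : (k : ℂ) ≠ 0 := by exact_mod_cast hk.ne'
  simp only [Set.mem_insert_iff, Set.mem_singleton_iff, not_or] at hz
  have e : (1 - z ^ 2) * (1 - (k : ℂ) ^ 2 * z ^ 2) =
      (z - 1) * (z - -1) * (k ^ 2 * (z - 1 / k) * (z - -1 / k)) := by field_simp; ring
  rw [e]
  have := sub_ne_zero.2 hz.1
  have := sub_ne_zero.2 hz.2.1
  have := sub_ne_zero.2 hz.2.2.1
  have := sub_ne_zero.2 hz.2.2.2
  positivity

/-- A branch of `√((1-z²)(1-k²z²))` on the closed upper half-plane is determined by its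
value at the origin. -/
lemma eq_of_sq_eq_of_eq_zero {k : ℝ} (hk : 0 < k) {q₁ q₂ : ℂ → ℂ}
    (h₁ : ContinuousOn q₁ ({z : ℂ | 0 ≤ z.im} \ {1, -1, (1 : ℂ) / k, -(1 : ℂ) / k}))
    (h₂ : ContinuousOn q₂ ({z : ℂ | 0 ≤ z.im} \ {1, -1, (1 : ℂ) / k, -(1 : ℂ) / k}))
    (hs₁ : ∀ z : ℂ, 0 ≤ z.im → q₁ z ^ 2 = (1 - z ^ 2) * (1 - (k : ℂ) ^ 2 * z ^ 2))
    (hs₂ : ∀ z : ℂ, 0 ≤ z.im → q₂ z ^ 2 = (1 - z ^ 2) * (1 - (k : ℂ) ^ 2 * z ^ 2))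
    (h0 : q₁ 0 = q₂ 0) {z : ℂ} (hz : 0 ≤ z.im) : q₁ z = q₂ z := by
  have hk' : (k : ℂ) ≠ 0 := by exact_mod_cast hk.ne'
  by_cases hzS : z ∈ ({1, -1, (1 : ℂ) / k, -(1 : ℂ) / k} : Set ℂ)
  · have h : (1 - z ^ 2) * (1 - (k : ℂ) ^ 2 * z ^ 2) = 0 := by
      rcases hzS with rfl | rfl | rfl | rfl <;> field_simp <;> ring
    have e1 := hs₁ z hz
    have e2 := hs₂ z hz
    rw [h] at e1 e2
    rw [pow_eq_zero_iff two_ne_zero |>.1 e1, pow_eq_zero_iff two_ne_zero |>.1 e2]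
  refine IsPreconnected.eq_of_sq_eq (isPreconnected_of_subset_closedUpper ?_ Set.sdiff_subset) h₁ h₂
    (fun w hw => ?_) (fun {w} hw h => ?_) (y := 0)
    ⟨by simp, by simp [hk', eq_comm (a := (0 : ℂ))]⟩ h0 ⟨hz, hzS⟩
  · intro w hw
    refine ⟨(show 0 < w.im from hw).le, ?_⟩
    rintro (rfl | rfl | rfl | rfl)
    · simp at hw
    · simp at hw
    · norm_cast at hw; simp at hw
    · norm_cast at hw; simp at hw
  · simp only [Pi.pow_apply]
    rw [hs₁ w hw.1, hs₂ w hw.1]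
  · have := hs₂ w hw.1
    rw [h] at this
    exact one_sub_sq_mul_one_sub_sq_ne_zero hk hw.2 (by rw [← this]; simp)

lemma ellipticBranch_neg_conj {k : ℝ} (hk : 0 < k) (hk1 : k < 1) {z : ℂ} (hz : 0 ≤ z.im) :
    (starRingEnd ℂ) (ellipticBranch k (-(starRingEnd ℂ) z)) = ellipticBranch k z := by
  have hc := continuous_ellipticBranch k
  refine eq_of_sq_eq_of_eq_zero hk (q₁ := fun z => (starRingEnd ℂ)
    (ellipticBranch k (-(starRingEnd ℂ) z))) ?_ hc.continuousOn (fun w hw => ?_)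
    (fun w hw => ellipticBranch_sq hk hw) ?_ hz
  · have : Continuous (starRingEnd ℂ) := Complex.continuous_conj
    fun_prop
  · rw [← map_pow, ellipticBranch_sq hk (by simpa)]
    simp
  · have := ellipticBranch_ofReal_of_mem_Icc_zero_one hk hk1 le_rfl zero_le_one
    simp only [Complex.ofReal_zero] at this
    simp only [map_zero, neg_zero, this, Complex.conj_ofReal]

lemma neg_one_div_mul_im {k : ℝ} (hk : k ≠ 0) {z : ℂ} (hz : z ≠ 0) :
    (-1 / (k * z)).im = z.im / (k * Complex.normSq z) := by
  have : Complex.normSq z ≠ 0 := (Complex.normSq_pos.2 hz).ne'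
  rw [Complex.div_im]
  simp [Complex.normSq_mul, Complex.normSq_ofReal]
  field_simp

lemma neg_one_div_mul_im_pos {k : ℝ} (hk : 0 < k) {z : ℂ} (hz : 0 < z.im) :
    0 < (-1 / (k * z)).im := by
  have h0 : z ≠ 0 := fun h => by simp [h] at hz
  have := Complex.normSq_pos.2 h0
  rw [neg_one_div_mul_im hk.ne' h0]; positivity

lemma neg_one_div_mul_im_nonneg {k : ℝ} (hk : 0 < k) {z : ℂ} (hz : 0 ≤ z.im) :
    0 ≤ (-1 / (k * z)).im := by
  by_cases h0 : z = 0
  · simp [h0]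
  have := Complex.normSq_pos.2 h0
  rw [neg_one_div_mul_im hk.ne' h0]; positivity

lemma ellipticBranch_neg_inv {k : ℝ} (hk : 0 < k) {z : ℂ} (hz : 0 < z.im) :
    ellipticBranch k (-1 / (k * z)) * (k * z ^ 2) = -ellipticBranch k z := by
  have hk' : (k : ℂ) ≠ 0 := by exact_mod_cast hk.ne'
  have hne : ∀ w ∈ {w : ℂ | 0 < w.im}, w ≠ 0 := fun w hw h => by simp [h] at hw
  have hc := continuous_ellipticBranch k
  have hsq : 0 < √k := Real.sqrt_pos.2 hk
  have hsq' : (√k : ℂ) ≠ 0 := by exact_mod_cast hsq.ne'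
  have hksq : (k : ℂ) = (√k : ℂ) ^ 2 := by exact_mod_cast (Real.sq_sqrt hk.le).symm
  have hmem : 0 < (Complex.I / (√k : ℂ)).im := by
    simp [Complex.div_im]; positivity
  refine (convex_halfSpace_im_gt 0).isPreconnected.eq_of_sq_eq (S := {w : ℂ | 0 < w.im})
    (f := fun z => ellipticBranch k (-1 / (k * z)) * (k * z ^ 2))
    (g := fun z => -ellipticBranch k z) ?_ ?_ (fun w hw => ?_) (fun {w} hw h => ?_)
    (y := Complex.I / √k) hmem ?_ hz
  · refine ContinuousOn.mul (hc.comp_continuousOn (ContinuousOn.div (by fun_prop) (by fun_prop)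
      fun w hw => mul_ne_zero hk' (hne w hw))) (by fun_prop)
  · fun_prop
  · have hw0 := hne w hw
    simp only [Pi.pow_apply]
    rw [mul_pow, neg_sq, ellipticBranch_sq hk (neg_one_div_mul_im_pos hk hw).le,
      ellipticBranch_sq hk (le_of_lt hw)]
    field_simp
    ring
  · have h1 := ellipticBranch_sq hk (le_of_lt hw)
    rw [neg_eq_zero.1 h] at h1
    refine one_sub_sq_mul_one_sub_sq_ne_zero hk (z := w) ?_ (by rw [← h1]; simp)
    rintro (rfl | rfl | rfl | rfl)
    · simp at hw
    · simp at hw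
    · norm_cast at hw; simp at hw
    · norm_cast at hw; simp at hw
  · have e1 : -1 / ((k : ℂ) * (Complex.I / √k)) = Complex.I / √k := by
      rw [hksq]; field_simp; rw [Complex.I_sq]
    have e2 : (k : ℂ) * (Complex.I / √k) ^ 2 = -1 := by
      rw [div_pow, Complex.I_sq, ← hksq]; field_simp
    rw [e1, e2]; ring

lemma differentiableAt_upperSqrt {w : ℂ} (hw : 0 < w.im) : DifferentiableAt ℂ upperSqrt w := by
  have h0 : upperSqrt w ≠ 0 := fun h => by
    have := upperSqrt_sq hw.le
    rw [h] at this
    simp [← this] at hw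
  have hev : ∀ᶠ y in 𝓝 w, upperSqrt y ^ 2 = y := by
    filter_upwards [(isOpen_lt continuous_const Complex.continuous_im).mem_nhds hw] with y hy
    exact upperSqrt_sq (show 0 < y.im from hy).le
  exact (HasDerivAt.of_local_left_inverse continuous_upperSqrt.continuousAt
    (hasDerivAt_pow 2 (upperSqrt w)) (by simpa using h0) hev).differentiableAt

lemma differentiableAt_ellipticBranch {k : ℝ} (hk : 0 < k) {z : ℂ} (hz : 0 < z.im) :
    DifferentiableAt ℂ (ellipticBranch k) z := by
  have hkz : 0 < k * z.im := by positivity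
  have h : ∀ f : ℂ → ℂ, Differentiable ℂ f → 0 < (f z).im →
      DifferentiableAt ℂ (fun z => upperSqrt (f z)) z := fun f hf hfz =>
    (differentiableAt_upperSqrt hfz).comp z hf.differentiableAt
  exact ((((h (fun z => z - 1) (by fun_prop) (by simpa)).mul
    (h (fun z => z + 1) (by fun_prop) (by simpa))).mul
    (h (fun z => k * z - 1) (by fun_prop) (by simpa))).mul
    (h (fun z => k * z + 1) (by fun_prop) (by simpa))).neg

lemma sqrt_abs_pos {k t : ℝ} (h1 : 1 - t ^ 2 ≠ 0) (h2 : 1 - k ^ 2 * t ^ 2 ≠ 0) :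
    0 < √|(1 - t ^ 2) * (1 - k ^ 2 * t ^ 2)| :=
  Real.sqrt_pos.2 (abs_pos.2 (mul_ne_zero h1 h2))

lemma le_norm_ellipticBranch {k : ℝ} (hk : 0 < k) {z : ℂ} (hz : 0 ≤ z.im) :
    √|(1 - ‖z‖ ^ 2) * (1 - k ^ 2 * ‖z‖ ^ 2)| ≤ ‖ellipticBranch k z‖ := by
  refine Real.sqrt_le_iff.2 ⟨norm_nonneg _, ?_⟩
  rw [← norm_pow (ellipticBranch k z), ellipticBranch_sq hk hz, norm_mul, abs_mul]
  refine mul_le_mul ?_ ?_ (abs_nonneg _) (norm_nonneg _)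
  · have := abs_norm_sub_norm_le 1 (z ^ 2)
    rwa [norm_one, norm_pow] at this
  · have := abs_norm_sub_norm_le 1 ((k : ℂ) ^ 2 * z ^ 2)
    rwa [norm_one, norm_mul, norm_pow, norm_pow, Complex.norm_real,
      Real.norm_of_nonneg hk.le] at this

lemma norm_inv_ellipticBranch_le {k : ℝ} (hk : 0 < k) {z : ℂ} (hz : 0 ≤ z.im)
    (h1 : 1 - ‖z‖ ^ 2 ≠ 0) (h2 : 1 - k ^ 2 * ‖z‖ ^ 2 ≠ 0) :
    ‖1 / ellipticBranch k z‖ ≤ ellipticDensity k ‖z‖ := by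
  rw [norm_div, norm_one, ellipticDensity]
  exact one_div_le_one_div_of_le (sqrt_abs_pos h1 h2) (le_norm_ellipticBranch hk hz)

lemma ellipticBranch_ne_zero {k : ℝ} (hk : 0 < k) {z : ℂ} (hz : 0 < z.im) :
    ellipticBranch k z ≠ 0 := by
  intro h
  have h1 := ellipticBranch_sq hk hz.le
  rw [h] at h1
  refine one_sub_sq_mul_one_sub_sq_ne_zero hk (z := z) ?_ (by rw [← h1]; simp)
  rintro (rfl | rfl | rfl | rfl)
  · simp at hz
  · simp at hz
  · norm_cast at hz
  · norm_cast at hz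

/-- The Schwarz–Christoffel integral for the explicit branch. -/
def ellipticMap (k : ℝ) (z : ℂ) : ℂ := ∫ s in (0 : ℝ)..1, z / ellipticBranch k (s * z)

lemma ellipticMap_zero (k : ℝ) : ellipticMap k 0 = 0 := by simp [ellipticMap]

/-- The integrand of `ellipticMap` in polar coordinates, cut off at the radius `‖z‖`. -/
def polarIntegrand (k : ℝ) (z : ℂ) : ℝ → ℂ :=
  {t : ℝ | t ≤ ‖z‖}.indicator fun t => z / ‖z‖ / ellipticBranch k (t * (z / ‖z‖))

lemma ellipticMap_eq_integral_polarIntegrand {k T : ℝ} {z : ℂ} (hz : ‖z‖ ≤ T) :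
    ellipticMap k z = ∫ t in (0 : ℝ)..T, polarIntegrand k z t := by
  rw [polarIntegrand, intervalIntegral.integral_indicator ⟨norm_nonneg z, hz⟩]
  by_cases h0 : z = 0
  · simp [h0, ellipticMap_zero]
  have hn : ‖z‖ ≠ 0 := norm_ne_zero_iff.2 h0
  have hn' : (‖z‖ : ℂ) ≠ 0 := by exact_mod_cast hn
  have := intervalIntegral.smul_integral_comp_mul_left (a := 0) (b := 1)
    (fun t : ℝ => z / ‖z‖ / ellipticBranch k (t * (z / ‖z‖))) ‖z‖
  rw [mul_zero, mul_one] at this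
  rw [← this, ellipticMap, ← intervalIntegral.integral_smul]
  refine intervalIntegral.integral_congr fun s _ => ?_
  have e : ((‖z‖ * s : ℝ) : ℂ) * (z / ‖z‖) = s * z := by push_cast; field_simp
  simp only [e, Complex.real_smul]
  field_simp

lemma measurable_ellipticBranch (k : ℝ) : Measurable (ellipticBranch k) :=
  (continuous_ellipticBranch k).measurable

lemma measurable_polarIntegrand (k : ℝ) (z : ℂ) : Measurable (polarIntegrand k z) := by
  refine Measurable.indicator ?_ measurableSet_Iic
  have := measurable_ellipticBranch k
  fun_prop

lemma ae_ne_singular (k : ℝ) (hk : 0 < k) (r : ℝ) :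
    ∀ᵐ t : ℝ, t ≠ r ∧ (0 ≤ t → 1 - t ^ 2 ≠ 0 ∧ 1 - k ^ 2 * t ^ 2 ≠ 0) := by
  have h : ({r, 1, 1 / k} : Set ℝ).Countable := (Set.toFinite _).countable
  filter_upwards [h.ae_notMem volume] with t ht
  simp only [Set.mem_insert_iff, Set.mem_singleton_iff, not_or] at ht
  refine ⟨ht.1, fun h0 => ⟨fun h => ht.2.1 ?_, fun h => ht.2.2 ?_⟩⟩
  · have : t ^ 2 = 1 ^ 2 := by linarith
    exact (pow_left_inj₀ h0 zero_le_one two_ne_zero).1 this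
  · have : (k * t) ^ 2 = 1 ^ 2 := by linarith
    rw [eq_div_iff hk.ne', mul_comm]
    exact (pow_left_inj₀ (by positivity) zero_le_one two_ne_zero).1 this

lemma norm_polarIntegrand_le {k : ℝ} (hk : 0 < k) {z : ℂ} (hz : 0 ≤ z.im) {t : ℝ} (ht : 0 < t)
    (h1 : 1 - t ^ 2 ≠ 0) (h2 : 1 - k ^ 2 * t ^ 2 ≠ 0) :
    ‖polarIntegrand k z t‖ ≤ ellipticDensity k t := by
  by_cases htz : t ≤ ‖z‖
  · have hn : 0 < ‖z‖ := ht.trans_le htz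
    have hnorm : ‖(t : ℂ) * (z / ‖z‖)‖ = t := by
      simp [abs_of_pos ht, hn.ne']
    have him : 0 ≤ ((t : ℂ) * (z / ‖z‖)).im := by
      rw [Complex.im_ofReal_mul, Complex.div_ofReal_im]; positivity
    rw [polarIntegrand, Set.indicator_of_mem (show t ∈ {t : ℝ | t ≤ ‖z‖} from htz),
      div_eq_mul_one_div, norm_mul]
    have h3 : ‖z / ‖z‖‖ = 1 := by simp [hn.ne']
    rw [h3, one_mul]
    have := norm_inv_ellipticBranch_le hk him (by rwa [hnorm]) (by rwa [hnorm])
    rwa [hnorm] at this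
  · rw [polarIntegrand, Set.indicator_of_notMem (show t ∉ {t : ℝ | t ≤ ‖z‖} from htz), norm_zero]
    exact ellipticDensity_nonneg k t

lemma continuousOn_ellipticMap {k : ℝ} (hk : 0 < k) (hk1 : k < 1) :
    ContinuousOn (ellipticMap k) {z : ℂ | 0 ≤ z.im} := by
  intro z₀ hz₀
  set T := ‖z₀‖ + 1
  have hT : 0 ≤ T := by positivity
  have hev : ∀ᶠ z in 𝓝[{z : ℂ | 0 ≤ z.im}] z₀,
      ellipticMap k z = ∫ t in (0 : ℝ)..T, polarIntegrand k z t := by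
    have : ∀ᶠ z in 𝓝 z₀, ‖z‖ < T :=
      continuous_norm.continuousAt.eventually_lt continuousAt_const (by simp [T])
    filter_upwards [nhdsWithin_le_nhds this] with z hz
    exact ellipticMap_eq_integral_polarIntegrand hz.le
  refine ContinuousWithinAt.congr_of_eventuallyEq ?_ hev (hev.self_of_nhdsWithin hz₀)
  refine intervalIntegral.continuousWithinAt_of_dominated_interval
    (bound := ellipticDensity k)
    (Eventually.of_forall fun z => (measurable_polarIntegrand k z).aestronglyMeasurable) ?_
    (intervalIntegrable_ellipticDensity hk hk1 le_rfl hT) ?_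
  · filter_upwards [self_mem_nhdsWithin] with z hz
    filter_upwards [ae_ne_singular k hk ‖z₀‖] with t ht htT
    rw [Set.uIoc_of_le hT] at htT
    exact norm_polarIntegrand_le hk hz htT.1 (ht.2 htT.1.le).1 (ht.2 htT.1.le).2
  · filter_upwards [ae_ne_singular k hk ‖z₀‖] with t ht htT
    rw [Set.uIoc_of_le hT] at htT
    rcases lt_or_gt_of_ne ht.1 with hlt | hgt
    · have hn : 0 < ‖z₀‖ := htT.1.trans hlt
      have hn' : (‖z₀‖ : ℂ) ≠ 0 := by exact_mod_cast hn.ne'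
      have hev : (fun z => polarIntegrand k z t) =ᶠ[𝓝[{z : ℂ | 0 ≤ z.im}] z₀]
          fun z => z / ‖z‖ / ellipticBranch k (t * (z / ‖z‖)) := by
        filter_upwards [nhdsWithin_le_nhds (continuousAt_const.eventually_lt
          continuous_norm.continuousAt hlt)] with z hz
        exact Set.indicator_of_mem (show t ∈ {t : ℝ | t ≤ ‖z‖} from le_of_lt hz) _
      refine ContinuousWithinAt.congr_of_eventuallyEq ?_ hev (hev.self_of_nhdsWithin hz₀)
      have hnorm : ‖(t : ℂ) * (z₀ / ‖z₀‖)‖ = t := by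
        simp [abs_of_pos htT.1, hn.ne']
      have him : 0 ≤ ((t : ℂ) * (z₀ / ‖z₀‖)).im := by
        have : 0 ≤ z₀.im := hz₀
        have := htT.1
        rw [Complex.im_ofReal_mul, Complex.div_ofReal_im]; positivity
      have hne : ellipticBranch k (t * (z₀ / ‖z₀‖)) ≠ 0 := by
        have h1 := le_norm_ellipticBranch hk him
        rw [hnorm] at h1
        exact norm_pos_iff.1
          ((sqrt_abs_pos (ht.2 htT.1.le).1 (ht.2 htT.1.le).2).trans_le h1)
      have hc : ContinuousAt (fun z : ℂ => z / (‖z‖ : ℂ)) z₀ :=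
        continuousAt_id.div (by fun_prop) hn'
      exact (hc.div ((continuous_ellipticBranch k).continuousAt.comp
        (continuousAt_const.mul hc)) hne).continuousWithinAt
    · have hev : (fun z => polarIntegrand k z t) =ᶠ[𝓝[{z : ℂ | 0 ≤ z.im}] z₀] fun _ => 0 := by
        filter_upwards [nhdsWithin_le_nhds (continuous_norm.continuousAt.eventually_lt
          continuousAt_const hgt)] with z hz
        exact Set.indicator_of_notMem (show t ∉ {t : ℝ | t ≤ ‖z‖} from not_le.2 hz) _
      exact continuousWithinAt_const.congr_of_eventuallyEq hev (hev.self_of_nhdsWithin hz₀)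

lemma differentiableOn_inv_ellipticBranch {k : ℝ} (hk : 0 < k) :
    DifferentiableOn ℂ (fun z => 1 / ellipticBranch k z) {z : ℂ | 0 < z.im} := fun _ hz =>
  ((differentiableAt_const 1).div (differentiableAt_ellipticBranch hk hz)
    (ellipticBranch_ne_zero hk hz)).differentiableWithinAt

lemma norm_inv_ellipticBranch_le_two {k : ℝ} (hk : 0 < k) (hk1 : k < 1) {z : ℂ} (hz : 0 ≤ z.im)
    (hn : ‖z‖ ≤ 1 / 2) : ‖1 / ellipticBranch k z‖ ≤ 2 := by
  have h1 : ‖z‖ ^ 2 ≤ 1 / 4 := by nlinarith [norm_nonneg z]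
  have h2 : k ^ 2 * ‖z‖ ^ 2 ≤ 1 / 4 := by nlinarith [sq_nonneg ‖z‖]
  refine (norm_inv_ellipticBranch_le hk hz (by linarith) (by linarith)).trans ?_
  have : (1 / 2 : ℝ) ≤ √|(1 - ‖z‖ ^ 2) * (1 - k ^ 2 * ‖z‖ ^ 2)| := by
    refine Real.le_sqrt_of_sq_le ?_
    rw [abs_of_nonneg (mul_nonneg (by linarith) (by linarith))]
    nlinarith
  rw [ellipticDensity, div_le_iff₀ (by linarith)]
  linarith

lemma intervalIntegrable_integrand {k : ℝ} (hk : 0 < k) (hk1 : k < 1) {z : ℂ} (hz : 0 ≤ z.im) :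
    IntervalIntegrable (fun s : ℝ => z / ellipticBranch k (s * z)) volume 0 1 := by
  have hd := (intervalIntegrable_ellipticDensity hk hk1 le_rfl (norm_nonneg z)).comp_mul_right
    (c := ‖z‖)
  by_cases h0 : z = 0
  · simp [h0]
  have hn : 0 < ‖z‖ := norm_pos_iff.2 h0
  rw [zero_div, div_self hn.ne'] at hd
  refine (hd.const_mul ‖z‖).mono_fun' ?_ ?_
  · have := measurable_ellipticBranch k
    exact Measurable.aestronglyMeasurable (by fun_prop)
  · rw [Set.uIoc_of_le zero_le_one]
    refine (ae_restrict_iff' measurableSet_Ioc).2 ?_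
    have h : ({1 / ‖z‖, 1 / (k * ‖z‖)} : Set ℝ).Countable := (Set.toFinite _).countable
    filter_upwards [h.ae_notMem volume] with s hs hs0
    simp only [Set.mem_insert_iff, Set.mem_singleton_iff, not_or] at hs
    have hnorm : ‖(s : ℂ) * z‖ = s * ‖z‖ := by simp [abs_of_pos hs0.1]
    have hp : 0 ≤ s * ‖z‖ := mul_nonneg hs0.1.le hn.le
    have him : 0 ≤ ((s : ℂ) * z).im := by
      rw [Complex.im_ofReal_mul]; exact mul_nonneg hs0.1.le hz
    have := norm_inv_ellipticBranch_le hk him (fun h => hs.1 ?_) (fun h => hs.2 ?_)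
    · rw [hnorm] at this
      rw [div_eq_mul_one_div, norm_mul]
      exact mul_le_mul_of_nonneg_left this hn.le
    · rw [hnorm] at h
      have : (s * ‖z‖) ^ 2 = 1 ^ 2 := by linarith
      rw [eq_div_iff hn.ne']
      exact (pow_left_inj₀ hp zero_le_one two_ne_zero).1 this
    · rw [hnorm] at h
      have : (k * (s * ‖z‖)) ^ 2 = 1 ^ 2 := by linarith
      rw [eq_div_iff (by positivity)]
      rw [← (pow_left_inj₀ (by positivity) zero_le_one two_ne_zero).1 this]
      ring

lemma hasDerivAt_ellipticMap {k : ℝ} (hk : 0 < k) (hk1 : k < 1) {z : ℂ} (hz : 0 < z.im) :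
    HasDerivAt (ellipticMap k) (1 / ellipticBranch k z) z := by
  have hconv : Convex ℝ {z : ℂ | 0 < z.im} := convex_halfSpace_im_gt 0
  have hopen : IsOpen {z : ℂ | 0 < z.im} := isOpen_lt continuous_const Complex.continuous_im
  have hdiff := differentiableOn_inv_ellipticBranch hk
  obtain ⟨F, hF⟩ := hconv.exists_forall_hasDerivWithinAt hdiff
  have hF' : ∀ w ∈ {z : ℂ | 0 < z.im}, HasDerivAt F (1 / ellipticBranch k w) w := fun w hw =>
    (hF w hw).hasDerivAt (hopen.mem_nhds hw)
  have him : ∀ w ∈ {z : ℂ | 0 < z.im}, ∀ s : ℝ, 0 < s → ((s : ℂ) * w) ∈ {z : ℂ | 0 < z.im} :=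
    fun w hw s hs => by
      change 0 < ((s : ℂ) * w).im
      rw [Complex.im_ofReal_mul]; exact mul_pos hs hw
  have hlim : ∀ w ∈ {z : ℂ | 0 < z.im},
      Tendsto (fun ε : ℝ => F w - F (ε * w)) (𝓝[>] 0) (𝓝 (ellipticMap k w)) := by
    intro w hw
    have hint := intervalIntegrable_integrand hk hk1 (z := w) (show 0 < w.im from hw).le
    have h1 : ContinuousOn (fun ε => ∫ s in (1 : ℝ)..ε, w / ellipticBranch k (s * w))
        (Set.uIcc 0 1) :=
      intervalIntegral.continuousOn_primitive_interval' (b₁ := 0) (b₂ := 1) hint (by simp)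
    have h2 : Tendsto (fun ε : ℝ => -∫ s in (1 : ℝ)..ε, w / ellipticBranch k (s * w)) (𝓝[>] 0)
        (𝓝 (-∫ s in (1 : ℝ)..0, w / ellipticBranch k (s * w))) := by
      refine ((h1 0 (by simp)).mono_left ?_).neg
      rw [Set.uIcc_of_le zero_le_one, ← nhdsWithin_Ioc_eq_nhdsGT zero_lt_one]
      exact nhdsWithin_mono _ Set.Ioc_subset_Icc_self
    rw [← intervalIntegral.integral_symm] at h2
    refine h2.congr' ?_
    filter_upwards [Ioo_mem_nhdsGT zero_lt_one] with ε hε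
    rw [← intervalIntegral.integral_symm]
    have hsub : Set.uIcc ε 1 ⊆ Set.Icc ε 1 := (Set.uIcc_of_le hε.2.le).subset
    have := intervalIntegral.integral_eq_sub_of_hasDerivAt (a := ε) (b := 1)
      (f := fun s : ℝ => F (s * w)) (f' := fun s : ℝ => w / ellipticBranch k (s * w)) ?_ ?_
    · rw [this]; simp
    · intro s hs
      have hs0 : 0 < s := hε.1.trans_le (hsub hs).1
      have h3 : HasDerivAt (fun s : ℝ => (s : ℂ) * w) w s := by
        simpa using (Complex.ofRealCLM.hasDerivAt (x := s)).mul_const w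
      have := (hF' _ (him w hw s hs0)).comp s h3
      refine this.congr_deriv ?_
      ring
    · refine hint.mono_set ?_
      rw [Set.uIcc_of_le hε.2.le, Set.uIcc_of_le zero_le_one]
      exact Set.Icc_subset_Icc_left hε.1.le
  have hdiff0 : ∀ w ∈ {z : ℂ | 0 < z.im}, ∀ w' ∈ {z : ℂ | 0 < z.im},
      Tendsto (fun ε : ℝ => F (ε * w) - F (ε * w')) (𝓝[>] 0) (𝓝 0) := by
    intro w hw w' hw'
    have hsmall : ∀ v : ℂ, ∀ᶠ ε : ℝ in 𝓝[>] 0, ‖(ε : ℂ) * v‖ < 1 / 2 := fun v => by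
      have hc : Continuous fun ε : ℝ => ‖(ε : ℂ) * v‖ := by fun_prop
      exact nhdsWithin_le_nhds (hc.continuousAt.eventually_lt continuousAt_const (by simp))
    have hbound : ∀ᶠ ε : ℝ in 𝓝[>] 0,
        ‖F (ε * w) - F (ε * w')‖ ≤ 2 * ‖(ε : ℂ) * w - ε * w'‖ := by
      filter_upwards [hsmall w, hsmall w', self_mem_nhdsWithin] with ε h1 h2 h3
      have hcv : Convex ℝ ({z : ℂ | 0 < z.im} ∩ Metric.ball 0 (1 / 2)) :=
        hconv.inter (convex_ball _ _)
      refine hcv.norm_image_sub_le_of_norm_hasDerivWithin_le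
        (fun v hv => (hF' v hv.1).hasDerivWithinAt)
        (fun v hv => norm_inv_ellipticBranch_le_two hk hk1 (show 0 < v.im from hv.1).le
          (by simpa using (mem_ball_zero_iff.1 hv.2).le))
        ⟨him w' hw' ε h3, mem_ball_zero_iff.2 h2⟩ ⟨him w hw ε h3, mem_ball_zero_iff.2 h1⟩
    refine squeeze_zero_norm' hbound ?_
    have hc : Continuous fun ε : ℝ => 2 * ‖(ε : ℂ) * w - ε * w'‖ := by fun_prop
    have := hc.tendsto 0
    simp only [Complex.ofReal_zero, zero_mul, sub_zero, norm_zero, mul_zero] at this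
    exact this.mono_left nhdsWithin_le_nhds
  have hconst : ∀ w ∈ {z : ℂ | 0 < z.im},
      ellipticMap k w = F w - (F Complex.I - ellipticMap k Complex.I) := by
    intro w hw
    have hI : Complex.I ∈ {z : ℂ | 0 < z.im} := by simp
    have h1 := ((hlim w hw).sub (hlim _ hI)).add (hdiff0 w hw _ hI)
    have h2 : Tendsto (fun _ : ℝ => F w - F Complex.I) (𝓝[>] 0)
        (𝓝 (ellipticMap k w - ellipticMap k Complex.I + 0)) := by
      refine h1.congr fun ε => ?_
      ring
    have := tendsto_nhds_unique h2 tendsto_const_nhds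
    linear_combination this
  refine ((hF' z hz).sub_const (F Complex.I - ellipticMap k Complex.I)).congr_of_eventuallyEq ?_
  filter_upwards [hopen.mem_nhds hz] with w hw using hconst w hw

lemma ellipticMap_neg_conj {k : ℝ} (hk : 0 < k) (hk1 : k < 1) {z : ℂ} (hz : 0 ≤ z.im) :
    ellipticMap k (-(starRingEnd ℂ) z) = -(starRingEnd ℂ) (ellipticMap k z) := by
  rw [ellipticMap, ellipticMap, ← intervalIntegral.intervalIntegral_conj,
    ← intervalIntegral.integral_neg]
  refine intervalIntegral.integral_congr fun s hs => ?_
  rw [Set.uIcc_of_le zero_le_one] at hs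
  have him : 0 ≤ ((s : ℂ) * z).im := by
    rw [Complex.im_ofReal_mul]; exact mul_nonneg hs.1 hz
  have := ellipticBranch_neg_conj hk hk1 him
  simp only [map_mul, Complex.conj_ofReal] at this
  simp only [map_div₀]
  rw [← this, Complex.conj_conj, mul_neg, neg_div]

lemma ellipticMap_ofReal (k x : ℝ) :
    ellipticMap k x = ∫ t in (0 : ℝ)..x, 1 / ellipticBranch k t := by
  have := intervalIntegral.smul_integral_comp_mul_right (a := 0) (b := 1)
    (fun t : ℝ => 1 / ellipticBranch k t) x
  rw [zero_mul, one_mul] at this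
  rw [← this, ellipticMap, ← intervalIntegral.integral_smul]
  refine intervalIntegral.integral_congr fun s _ => ?_
  simp only [Complex.real_smul]
  push_cast
  ring

lemma ellipticMap_ofReal_of_mem_Icc_zero_one {k x : ℝ} (hk : 0 < k) (hk1 : k < 1) (hx : 0 ≤ x)
    (hx1 : x ≤ 1) : ellipticMap k x = (∫ t in (0 : ℝ)..x, ellipticDensity k t : ℝ) := by
  rw [ellipticMap_ofReal, ← intervalIntegral.integral_ofReal]
  refine intervalIntegral.integral_congr fun t ht => ?_
  rw [Set.uIcc_of_le hx] at ht
  rw [ellipticBranch_ofReal_of_mem_Icc_zero_one hk hk1 ht.1 (ht.2.trans hx1), ellipticDensity]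
  push_cast
  rfl

lemma ellipticMap_one {k : ℝ} (hk : 0 < k) (hk1 : k < 1) :
    ellipticMap k 1 = ellipticK (k ^ 2) := by
  have := ellipticMap_ofReal_of_mem_Icc_zero_one hk hk1 zero_le_one le_rfl
  rwa [Complex.ofReal_one, integral_ellipticDensity_zero_one hk hk1] at this

lemma ellipticMap_ofReal_of_mem_Icc_one_inv {k x : ℝ} (hk : 0 < k) (hk1 : k < 1) (hx : 1 ≤ x)
    (hkx : k * x ≤ 1) : ellipticMap k x =
      ellipticK (k ^ 2) + (∫ t in (1 : ℝ)..x, ellipticDensity k t : ℝ) * Complex.I := by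
  have hx0 : 0 ≤ x := by linarith
  have hint : IntervalIntegrable (fun t : ℝ => 1 / ellipticBranch k t) volume 0 x := by
    refine (intervalIntegrable_ellipticDensity hk hk1 le_rfl hx0).mono_fun' ?_ ?_
    · have := measurable_ellipticBranch k
      exact Measurable.aestronglyMeasurable (by fun_prop)
    · rw [Set.uIoc_of_le hx0]
      refine (ae_restrict_iff' measurableSet_Ioc).2 ?_
      filter_upwards [ae_ne_singular k hk 0] with t ht ht0
      have h := ht.2 ht0.1.le
      have hn : ‖(t : ℂ)‖ = t := by simp [abs_of_pos ht0.1]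
      have := norm_inv_ellipticBranch_le hk (z := t) (by simp) (by rw [hn]; exact h.1)
        (by rw [hn]; exact h.2)
      rwa [hn] at this
  have h01 : (1 : ℝ) ∈ Set.uIcc 0 x := by rw [Set.uIcc_of_le hx0]; exact ⟨zero_le_one, hx⟩
  rw [ellipticMap_ofReal, ← intervalIntegral.integral_add_adjacent_intervals (b := 1)
    (hint.mono_set (Set.uIcc_subset_uIcc_left h01))
    (hint.mono_set (Set.uIcc_subset_uIcc_right h01)),
    ← ellipticMap_ofReal, Complex.ofReal_one, ellipticMap_one hk hk1,
    ← intervalIntegral.integral_ofReal, ← intervalIntegral.integral_mul_const]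
  congr 1
  refine intervalIntegral.integral_congr fun t ht => ?_
  rw [Set.uIcc_of_le hx] at ht
  rw [ellipticBranch_ofReal_of_mem_Icc_one_inv hk ht.1
    ((mul_le_mul_of_nonneg_left ht.2 hk.le).trans hkx), ellipticDensity]
  push_cast
  rw [neg_mul, one_div, inv_neg, mul_inv, Complex.inv_I, one_div]
  ring

lemma ellipticMap_one_div {k : ℝ} (hk : 0 < k) (hk1 : k < 1) : ellipticMap k (1 / k) =
    ellipticK (k ^ 2) + ellipticK (1 - k ^ 2) * Complex.I := by
  have h1 : 1 ≤ 1 / k := by rw [le_div_iff₀ hk]; linarith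
  have := ellipticMap_ofReal_of_mem_Icc_one_inv hk hk1 h1 (by field_simp; rfl)
  rw [integral_ellipticDensity_one_inv hk hk1] at this
  exact_mod_cast this

lemma ellipticMap_neg_ofReal {k : ℝ} (hk : 0 < k) (hk1 : k < 1) (x : ℝ) :
    ellipticMap k (-x) = -(starRingEnd ℂ) (ellipticMap k x) := by
  have := ellipticMap_neg_conj hk hk1 (z := x) (by simp)
  rwa [Complex.conj_ofReal] at this

lemma ellipticMap_neg_one {k : ℝ} (hk : 0 < k) (hk1 : k < 1) :
    ellipticMap k (-1) = -ellipticK (k ^ 2) := by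
  have := ellipticMap_neg_ofReal hk hk1 1
  rwa [Complex.ofReal_one, ellipticMap_one hk hk1, Complex.conj_ofReal] at this

lemma ellipticMap_neg_one_div {k : ℝ} (hk : 0 < k) (hk1 : k < 1) :
    ellipticMap k (-1 / k) = -ellipticK (k ^ 2) + ellipticK (1 - k ^ 2) * Complex.I := by
  have := ellipticMap_neg_ofReal hk hk1 (1 / k)
  push_cast at this
  rw [ellipticMap_one_div hk hk1] at this
  rw [neg_div, this]
  simp
  ring

lemma isOpen_upper : IsOpen {z : ℂ | 0 < z.im} := isOpen_lt continuous_const Complex.continuous_im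

lemma ellipticMap_neg_one_div_mul_add {k : ℝ} (hk : 0 < k) (hk1 : k < 1) {z : ℂ}
    (hz : 0 ≤ z.im) (h0 : z ≠ 0) :
    ellipticMap k (-1 / (k * z)) + ellipticMap k z = ellipticK (1 - k ^ 2) * Complex.I := by
  have hk' : (k : ℂ) ≠ 0 := by exact_mod_cast hk.ne'
  have hne : ∀ w ∈ {w : ℂ | 0 < w.im}, w ≠ 0 := fun w hw h => by simp [h] at hw
  let G : ℂ → ℂ := fun z => ellipticMap k (-1 / (k * z)) + ellipticMap k z
  have hG : ∀ w ∈ {w : ℂ | 0 < w.im}, HasDerivAt G 0 w := by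
    intro w hw
    have hw0 := hne w hw
    have him := neg_one_div_mul_im_pos hk (z := w) hw
    have hq := ellipticBranch_ne_zero hk (z := w) hw
    have hq' := ellipticBranch_ne_zero hk him
    have h1 : HasDerivAt (fun z : ℂ => -1 / (k * z)) (1 / (k * w ^ 2)) w := by
      have := (((hasDerivAt_id w).const_mul (k : ℂ)).fun_inv (mul_ne_zero hk' hw0)).const_mul (-1)
      refine (this.congr_deriv ?_).congr_of_eventuallyEq (Eventually.of_forall fun z => ?_)
      · simp only [id]; field_simp
      · simp only [id]; ring
    refine (((hasDerivAt_ellipticMap hk hk1 him).comp w h1).add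
      (hasDerivAt_ellipticMap hk hk1 hw)).congr_deriv ?_
    have := ellipticBranch_neg_inv hk (z := w) hw
    have e : 1 / ellipticBranch k (-1 / (k * w)) * (1 / (k * w ^ 2)) =
        1 / (ellipticBranch k (-1 / (k * w)) * (k * w ^ 2)) := by field_simp
    rw [e, this]
    field_simp
    ring
  have hGc : ContinuousOn G ({z : ℂ | 0 ≤ z.im} \ {0}) := by
    have hc := continuousOn_ellipticMap hk hk1
    refine (hc.comp ?_ fun w hw => neg_one_div_mul_im_nonneg hk hw.1).add
      (hc.mono Set.sdiff_subset)
    exact continuousOn_const.div (by fun_prop) fun w hw => mul_ne_zero hk' hw.2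
  have hconst : Set.EqOn G (fun _ => G Complex.I) {z : ℂ | 0 < z.im} := fun w hw =>
    isOpen_upper.is_const_of_deriv_eq_zero (convex_halfSpace_im_gt 0).isPreconnected
      (fun v hv => (hG v hv).differentiableAt.differentiableWithinAt)
      (fun v hv => (hG v hv).deriv) hw (by simp)
  have hall : Set.EqOn G (fun _ => G Complex.I) ({z : ℂ | 0 ≤ z.im} \ {0}) := by
    refine hconst.of_subset_closure hGc continuousOn_const
      (fun w hw => ⟨(show 0 < w.im from hw).le, hne w hw⟩) ?_
    rw [Complex.closure_setOfPred_lt_im]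
    exact Set.sdiff_subset
  have h1 : G 1 = ellipticK (1 - k ^ 2) * Complex.I := by
    simp only [G, mul_one]
    rw [ellipticMap_neg_one_div hk hk1, ellipticMap_one hk hk1]
    ring
  rw [← h1]
  exact (hall ⟨hz, h0⟩).trans (hall ⟨by simp, by simp⟩).symm

lemma tendsto_ellipticMap_cocompact {k : ℝ} (hk : 0 < k) (hk1 : k < 1) :
    Tendsto (ellipticMap k) (cocompact ℂ ⊓ 𝓟 {z : ℂ | 0 ≤ z.im})
      (𝓝 (ellipticK (1 - k ^ 2) * Complex.I)) := by
  have h1 : Tendsto (fun z : ℂ => -1 / (k * z)) (cocompact ℂ) (𝓝 0) := by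
    rw [← Metric.cobounded_eq_cocompact]
    have := (tendsto_inv₀_cobounded (α := ℂ)).const_mul (-1 / (k : ℂ))
    rw [mul_zero] at this
    refine this.congr fun z => ?_
    rw [← div_eq_mul_inv, div_div]
  have h2 : Tendsto (fun z : ℂ => -1 / (k * z)) (cocompact ℂ ⊓ 𝓟 {z : ℂ | 0 ≤ z.im})
      (𝓝[{z : ℂ | 0 ≤ z.im}] 0) :=
    tendsto_nhdsWithin_iff.2 ⟨h1.mono_left inf_le_left,
      (eventually_principal.2 fun z hz => neg_one_div_mul_im_nonneg hk hz).filter_mono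
        inf_le_right⟩
  have h3 := (continuousOn_ellipticMap hk hk1 0 (by simp)).tendsto.comp h2
  rw [ellipticMap_zero] at h3
  have h4 := h3.const_sub ((ellipticK (1 - k ^ 2) : ℂ) * Complex.I)
  rw [sub_zero] at h4
  refine h4.congr' ?_
  have hne : ∀ᶠ z : ℂ in cocompact ℂ, z ≠ 0 :=
    (isCompact_singleton (x := (0 : ℂ))).compl_mem_cocompact
  filter_upwards [mem_inf_of_right (mem_principal_self _), mem_inf_of_left hne] with z hz h0
  have := ellipticMap_neg_one_div_mul_add hk hk1 hz h0
  rw [← this]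
  simp

lemma integral_ellipticDensity_nonneg (k : ℝ) {a b : ℝ} (h : a ≤ b) :
    0 ≤ ∫ t in a..b, ellipticDensity k t :=
  intervalIntegral.integral_nonneg h fun t _ => ellipticDensity_nonneg k t

lemma integral_ellipticDensity_mono {k : ℝ} (hk : 0 < k) (hk1 : k < 1) {a b c : ℝ} (ha : 0 ≤ a)
    (hab : a ≤ b) (hbc : b ≤ c) :
    ∫ t in a..b, ellipticDensity k t ≤ ∫ t in a..c, ellipticDensity k t := by
  rw [← intervalIntegral.integral_add_adjacent_intervals
    (intervalIntegrable_ellipticDensity hk hk1 ha (ha.trans hab))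
    (intervalIntegrable_ellipticDensity hk hk1 (ha.trans hab) (ha.trans (hab.trans hbc)))]
  exact le_add_of_nonneg_right (integral_ellipticDensity_nonneg k hbc)

lemma ellipticK_sq_nonneg {k : ℝ} (hk : 0 < k) (hk1 : k < 1) : 0 ≤ ellipticK (k ^ 2) := by
  rw [← integral_ellipticDensity_zero_one hk hk1]
  exact integral_ellipticDensity_nonneg k zero_le_one

lemma ellipticK_one_sub_sq_nonneg {k : ℝ} (hk : 0 < k) (hk1 : k < 1) :
    0 ≤ ellipticK (1 - k ^ 2) := by
  rw [← integral_ellipticDensity_one_inv hk hk1]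
  exact integral_ellipticDensity_nonneg k (by rw [le_div_iff₀ hk]; linarith)

/-- The nonnegative real axis is mapped to the boundary of the right half of the rectangle. -/
lemma ellipticMap_ofReal_mem_of_nonneg {k : ℝ} (hk : 0 < k) (hk1 : k < 1) {x : ℝ} (hx : 0 ≤ x) :
    (0 ≤ (ellipticMap k x).re ∧ (ellipticMap k x).re ≤ ellipticK (k ^ 2) ∧
      0 ≤ (ellipticMap k x).im ∧ (ellipticMap k x).im ≤ ellipticK (1 - k ^ 2)) ∧
    ((ellipticMap k x).re = ellipticK (k ^ 2) ∨ (ellipticMap k x).im = 0 ∨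
      (ellipticMap k x).im = ellipticK (1 - k ^ 2)) := by
  have hK := ellipticK_sq_nonneg hk hk1
  have hK' := ellipticK_one_sub_sq_nonneg hk hk1
  have hA : ∀ y : ℝ, 0 ≤ y → y ≤ 1 → 0 ≤ ∫ t in (0 : ℝ)..y, ellipticDensity k t ∧
      ∫ t in (0 : ℝ)..y, ellipticDensity k t ≤ ellipticK (k ^ 2) := fun y hy hy1 => by
    rw [← integral_ellipticDensity_zero_one hk hk1]
    exact ⟨integral_ellipticDensity_nonneg k hy, integral_ellipticDensity_mono hk hk1 le_rfl hy hy1⟩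
  rcases le_total x 1 with hx1 | hx1
  · have := hA x hx hx1
    rw [ellipticMap_ofReal_of_mem_Icc_zero_one hk hk1 hx hx1, Complex.ofReal_re, Complex.ofReal_im]
    exact ⟨⟨this.1, this.2, le_rfl, hK'⟩, Or.inr (Or.inl rfl)⟩
  rcases le_total (k * x) 1 with hkx | hkx
  · have h1 := integral_ellipticDensity_nonneg k hx1
    have h2 : ∫ t in (1 : ℝ)..x, ellipticDensity k t ≤ ellipticK (1 - k ^ 2) := by
      rw [← integral_ellipticDensity_one_inv hk hk1]
      exact integral_ellipticDensity_mono hk hk1 zero_le_one hx1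
        (by rwa [le_div_iff₀ hk, mul_comm])
    rw [ellipticMap_ofReal_of_mem_Icc_one_inv hk hk1 hx1 hkx]
    simp [hK, h1, h2]
  · have hx0 : 0 < x := by linarith
    have hkx0 : 0 < k * x := by linarith
    have h1 : 1 / (k * x) ≤ 1 := by rw [div_le_one hkx0]; exact hkx
    have h2 : 0 ≤ 1 / (k * x) := by positivity
    have h3 := ellipticMap_neg_one_div_mul_add hk hk1 (z := x) (by simp) (by exact_mod_cast hx0.ne')
    have h4 := ellipticMap_neg_ofReal hk hk1 (1 / (k * x))
    rw [ellipticMap_ofReal_of_mem_Icc_zero_one hk hk1 h2 h1, Complex.conj_ofReal] at h4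
    have e : (-((1 / (k * x) : ℝ) : ℂ)) = -1 / (k * x) := by push_cast; ring
    rw [e] at h4
    have h5 := hA _ h2 h1
    have h6 : ellipticMap k x = (∫ t in (0 : ℝ)..1 / (k * x), ellipticDensity k t : ℝ) +
        ellipticK (1 - k ^ 2) * Complex.I := by
      rw [← h3, h4]; ring
    rw [h6]
    simpa [hK'] using h5

/-- The real axis is mapped to the boundary of the rectangle. -/
lemma ellipticMap_ofReal_mem {k : ℝ} (hk : 0 < k) (hk1 : k < 1) (x : ℝ) :
    (-ellipticK (k ^ 2) ≤ (ellipticMap k x).re ∧ (ellipticMap k x).re ≤ ellipticK (k ^ 2) ∧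
      0 ≤ (ellipticMap k x).im ∧ (ellipticMap k x).im ≤ ellipticK (1 - k ^ 2)) ∧
    ((ellipticMap k x).re = -ellipticK (k ^ 2) ∨ (ellipticMap k x).re = ellipticK (k ^ 2) ∨
      (ellipticMap k x).im = 0 ∨ (ellipticMap k x).im = ellipticK (1 - k ^ 2)) := by
  rcases le_total 0 x with hx | hx
  · obtain ⟨⟨h1, h2, h3, h4⟩, h5⟩ := ellipticMap_ofReal_mem_of_nonneg hk hk1 hx
    exact ⟨⟨by linarith, h2, h3, h4⟩, Or.inr h5⟩
  · have h := ellipticMap_ofReal_mem_of_nonneg hk hk1 (neg_nonneg.2 hx)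
    have e := ellipticMap_neg_ofReal hk hk1 x
    rw [← Complex.ofReal_neg] at e
    rw [e, Complex.neg_re, Complex.neg_im, Complex.conj_re, Complex.conj_im, neg_neg] at h
    obtain ⟨⟨h1, h2, h3, h4⟩, h5⟩ := h
    refine ⟨⟨by linarith, by linarith, h3, h4⟩, ?_⟩
    rcases h5 with h5 | h5
    · exact Or.inl (by linarith)
    · exact Or.inr (Or.inr h5)

lemma map_nhds_ellipticMap {k : ℝ} (hk : 0 < k) (hk1 : k < 1) {z : ℂ} (hz : 0 < z.im) :
    map (ellipticMap k) (𝓝 z) = 𝓝 (ellipticMap k z) := by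
  have hd : DifferentiableOn ℂ (ellipticMap k) {z : ℂ | 0 < z.im} := fun w hw =>
    (hasDerivAt_ellipticMap hk hk1 hw).differentiableAt.differentiableWithinAt
  have hs := (hd.analyticAt (isOpen_upper.mem_nhds hz)).hasStrictDerivAt
  rw [(hasDerivAt_ellipticMap hk hk1 hz).deriv] at hs
  exact hs.map_nhds_eq (one_div_ne_zero (ellipticBranch_ne_zero hk hz))

lemma not_isLocalMin_re_mul_ellipticMap {k : ℝ} (hk : 0 < k) (hk1 : k < 1) {w : ℂ} (hw : w ≠ 0)
    {z : ℂ} (hz : 0 < z.im) : ¬IsLocalMin (fun z => (w * ellipticMap k z).re) z := by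
  intro h
  have h1 : ∀ᶠ v in 𝓝 (ellipticMap k z), (w * ellipticMap k z).re ≤ (w * v).re := by
    rw [← map_nhds_ellipticMap hk hk1 hz]
    exact h
  have hc : Continuous fun ε : ℝ => ellipticMap k z - ε * (starRingEnd ℂ) w := by fun_prop
  have h2 : Tendsto (fun ε : ℝ => ellipticMap k z - ε * (starRingEnd ℂ) w) (𝓝[>] 0)
      (𝓝 (ellipticMap k z)) := by
    have := hc.tendsto 0
    simp only [Complex.ofReal_zero, zero_mul, sub_zero] at this
    exact this.mono_left nhdsWithin_le_nhds
  obtain ⟨ε, hε, hε0⟩ := ((h2.eventually h1).and self_mem_nhdsWithin).exists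
  have e : w * (ellipticMap k z - ε * (starRingEnd ℂ) w) =
      w * ellipticMap k z - (ε * Complex.normSq w : ℝ) := by
    rw [mul_sub, mul_left_comm, Complex.mul_conj]; push_cast; ring
  rw [e, Complex.sub_re, Complex.ofReal_re] at hε
  have : 0 < ε * Complex.normSq w := mul_pos hε0 (Complex.normSq_pos.2 hw)
  linarith

/-- The minimum principle for real linear functionals of `ellipticMap` on possibly unbounded
subdomains of the upper half-plane. -/
lemma lt_re_mul_ellipticMap {k : ℝ} (hk : 0 < k) (hk1 : k < 1) {w : ℂ} (hw : w ≠ 0) {m : ℝ}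
    {Ω C : Set ℂ} (hΩ : IsOpen Ω) (hΩu : Ω ⊆ {z : ℂ | 0 < z.im}) (hC : IsClosed C)
    (hCu : C ⊆ {z : ℂ | 0 ≤ z.im}) (hΩC : Ω ⊆ C)
    (hb : ∀ z ∈ C \ Ω, m ≤ (w * ellipticMap k z).re)
    (hinf : m ≤ (w * (ellipticK (1 - k ^ 2) * Complex.I)).re) {z : ℂ} (hz : z ∈ Ω) :
    m < (w * ellipticMap k z).re := by
  have hle : ∀ z ∈ Ω, m ≤ (w * ellipticMap k z).re := by
    by_contra! hcon
    obtain ⟨z₀, hz₀, hlt⟩ := hcon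
    have hcont : ContinuousOn (fun z => (w * ellipticMap k z).re) C :=
      Complex.continuous_re.comp_continuousOn
        (continuousOn_const.mul ((continuousOn_ellipticMap hk hk1).mono hCu))
    have hlim : Tendsto (fun z => (w * ellipticMap k z).re) (cocompact ℂ ⊓ 𝓟 C)
        (𝓝 (w * (ellipticK (1 - k ^ 2) * Complex.I)).re) :=
      (Complex.continuous_re.tendsto _).comp (((tendsto_ellipticMap_cocompact hk hk1).mono_left
        (inf_le_inf_left _ (principal_mono.2 hCu))).const_mul w)
    obtain ⟨z₁, hz₁, hmin⟩ := hcont.exists_isMinOn' hC (hΩC hz₀)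
      ((hlim.eventually_const_lt (hlt.trans_le hinf)).mono fun _ h => h.le)
    have hz₁Ω : z₁ ∈ Ω := by
      by_contra hn
      have h1 := hb z₁ ⟨hz₁, hn⟩
      have h2 := hmin (hΩC hz₀)
      simp only [Set.mem_ofPred_eq] at h2
      linarith
    exact not_isLocalMin_re_mul_ellipticMap hk hk1 hw (hΩu hz₁Ω)
      (hmin.isLocalMin (mem_of_superset (hΩ.mem_nhds hz₁Ω) hΩC))
  refine lt_of_le_of_ne (hle z hz) fun heq => ?_
  refine not_isLocalMin_re_mul_ellipticMap hk hk1 hw (hΩu hz) ?_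
  filter_upwards [hΩ.mem_nhds hz] with v hv
  rw [← heq]
  exact hle v hv

lemma eq_ofReal_of_mem_diff {z : ℂ} (hz : z ∈ {z : ℂ | 0 ≤ z.im} \ {z : ℂ | 0 < z.im}) :
    z = (z.re : ℂ) :=
  Complex.ext rfl (le_antisymm (not_lt.1 hz.2) hz.1)

/-- The open rectangle with corners `±K(k²)` and `±K(k²) + iK(1-k²)`. -/
def ellipticRectangle (k : ℝ) : Set ℂ :=
  {w : ℂ | -ellipticK (k ^ 2) < w.re ∧ w.re < ellipticK (k ^ 2) ∧
    0 < w.im ∧ w.im < ellipticK (1 - k ^ 2)}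

lemma ellipticMap_mem_ellipticRectangle {k : ℝ} (hk : 0 < k) (hk1 : k < 1) {z : ℂ}
    (hz : 0 < z.im) : ellipticMap k z ∈ ellipticRectangle k := by
  have hK := ellipticK_sq_nonneg hk hk1
  have hK' := ellipticK_one_sub_sq_nonneg hk hk1
  have key : ∀ (w : ℂ) (m : ℝ), w ≠ 0 → (∀ x : ℝ, m ≤ (w * ellipticMap k x).re) →
      m ≤ (w * (ellipticK (1 - k ^ 2) * Complex.I)).re → m < (w * ellipticMap k z).re :=
    fun w m hw hb hinf => lt_re_mul_ellipticMap hk hk1 hw isOpen_upper subset_rfl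
      (isClosed_le continuous_const Complex.continuous_im) subset_rfl
      (fun v hv => (show 0 < v.im from hv).le)
      (fun v hv => by rw [eq_ofReal_of_mem_diff hv]; exact hb _) hinf hz
  have hx := fun x => (ellipticMap_ofReal_mem hk hk1 x).1
  have h1 := key 1 (-ellipticK (k ^ 2)) one_ne_zero (fun x => by simpa using (hx x).1)
    (by simpa using hK)
  have h2 := key (-1) (-ellipticK (k ^ 2)) (by simp) (fun x => by simpa using (hx x).2.1)
    (by simpa using hK)
  have h3 := key (-Complex.I) 0 (by simp) (fun x => by simpa using (hx x).2.2.1)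
    (by simpa using hK')
  have h4 := key Complex.I (-ellipticK (1 - k ^ 2)) (by simp)
    (fun x => by simpa using (hx x).2.2.2) (by simp)
  simp at h1 h2 h3 h4
  exact ⟨h1, h2, h3, h4⟩

lemma ellipticMap_re_eq_zero {k : ℝ} (hk : 0 < k) (hk1 : k < 1) {z : ℂ} (hz : 0 ≤ z.im)
    (hre : z.re = 0) : (ellipticMap k z).re = 0 := by
  have h := ellipticMap_neg_conj hk hk1 hz
  have e : -(starRingEnd ℂ) z = z := Complex.ext (by simp [hre]) (by simp)
  rw [e] at h
  have := congrArg Complex.re h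
  simp only [Complex.neg_re, Complex.conj_re] at this
  linarith

lemma ellipticMap_re_pos {k : ℝ} (hk : 0 < k) (hk1 : k < 1) {z : ℂ} (hz : 0 < z.im)
    (hre : 0 < z.re) : 0 < (ellipticMap k z).re := by
  have := lt_re_mul_ellipticMap hk hk1 one_ne_zero (m := 0)
    (Ω := {z : ℂ | 0 < z.im} ∩ {z : ℂ | 0 < z.re}) (C := {z : ℂ | 0 ≤ z.im} ∩ {z : ℂ | 0 ≤ z.re})
    (isOpen_upper.inter (isOpen_lt continuous_const Complex.continuous_re))
    Set.inter_subset_left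
    ((isClosed_le continuous_const Complex.continuous_im).inter
      (isClosed_le continuous_const Complex.continuous_re)) Set.inter_subset_left
    (fun v hv => ⟨(show 0 < v.im from hv.1).le, (show 0 < v.re from hv.2).le⟩)
    (fun v hv => ?_) (by simp) ⟨hz, hre⟩
  · simpa using this
  · rw [one_mul]
    have h1 : 0 ≤ v.im := hv.1.1
    have h2 : 0 ≤ v.re := hv.1.2
    rcases h1.eq_or_lt with h | h
    · have e : v = (v.re : ℂ) := Complex.ext rfl (by simp [h])
      rw [e]
      exact (ellipticMap_ofReal_mem_of_nonneg hk hk1 h2).1.1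
    · have h3 : v.re = 0 := le_antisymm (not_lt.1 fun h' => hv.2 ⟨h, h'⟩) h2
      exact (ellipticMap_re_eq_zero hk hk1 h1 h3).ge

lemma ellipticMap_re_neg {k : ℝ} (hk : 0 < k) (hk1 : k < 1) {z : ℂ} (hz : 0 < z.im)
    (hre : z.re < 0) : (ellipticMap k z).re < 0 := by
  have h := ellipticMap_re_pos hk hk1 (z := -(starRingEnd ℂ) z) (by simpa) (by simpa)
  rw [ellipticMap_neg_conj hk hk1 hz.le] at h
  simpa using h

lemma ellipticBranch_im_ne_zero {k : ℝ} (hk : 0 < k) (hk1 : k < 1) {z : ℂ} (hz : 0 < z.im)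
    (hre : z.re ≠ 0) : (ellipticBranch k z).im ≠ 0 := by
  intro h
  have hsq := ellipticBranch_sq hk hz.le
  obtain ⟨a, b⟩ := z
  generalize ellipticBranch k ⟨a, b⟩ = q at *
  have e1 := congrArg Complex.re hsq
  have e2 := congrArg Complex.im hsq
  simp [pow_two] at e1 e2 h hz hre
  rw [h] at e1 e2
  have hk2 : 0 < k ^ 2 := by positivity
  have hk3 : 0 < 1 - k ^ 2 := by nlinarith
  have hab : a * b ≠ 0 := mul_ne_zero hre hz.ne'
  have h3 : a * b * (1 + k ^ 2 - 2 * k ^ 2 * (a * a - b * b)) = 0 := by linarith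
  have h4 : 2 * k ^ 2 * (a * a - b * b) = 1 + k ^ 2 := by
    rcases mul_eq_zero.1 h3 with h | h
    · exact absurd h hab
    · linarith
  have h5 : 4 * k ^ 2 * (q.re * q.re) = -(1 - k ^ 2) ^ 2 - 16 * k ^ 4 * (a * b) ^ 2 := by
    linear_combination 4 * k ^ 2 * e1 -
      (2 + 2 * k ^ 2 - 2 * k ^ 2 * (a * a - b * b) - (1 + k ^ 2)) * h4
  nlinarith [mul_nonneg hk2.le (mul_self_nonneg q.re), pow_pos hk3 2,
    mul_nonneg (pow_pos hk 4).le (sq_nonneg (a * b))]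

lemma ellipticBranch_re_ne_zero {k : ℝ} (hk : 0 < k) {z : ℂ} (hz : 0 < z.im)
    (hre : z.re = 0) : (ellipticBranch k z).re ≠ 0 := by
  intro h
  have hsq := ellipticBranch_sq hk hz.le
  obtain ⟨a, b⟩ := z
  generalize ellipticBranch k ⟨a, b⟩ = q at *
  have e1 := congrArg Complex.re hsq
  simp only at hre
  subst hre
  simp [pow_two] at e1 h
  rw [h] at e1
  nlinarith [mul_self_nonneg q.im, mul_self_nonneg b, mul_self_nonneg (k * b),
    mul_self_nonneg (k * b * b)]

lemma injOn_ellipticMap_of_convex {k : ℝ} (hk : 0 < k) (hk1 : k < 1) {C : Set ℂ}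
    (hC : Convex ℝ C) (hCu : C ⊆ {z : ℂ | 0 < z.im}) {c : ℂ}
    (hc : ∀ z ∈ C, (c * (1 / ellipticBranch k z)).re ≠ 0) : Set.InjOn (ellipticMap k) C := by
  intro z₁ h₁ z₂ h₂ heq
  by_contra hne
  have hsub : z₂ - z₁ ≠ 0 := sub_ne_zero.2 (Ne.symm hne)
  have hmem : ∀ t ∈ Set.Icc (0 : ℝ) 1, z₁ + t * (z₂ - z₁) ∈ C := fun t ht => by
    have := hC.add_smul_sub_mem h₁ h₂ ht
    rwa [Complex.real_smul] at this
  have hderiv : ∀ t ∈ Set.Icc (0 : ℝ) 1,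
      HasDerivAt (fun t : ℝ => (c / (z₂ - z₁) * ellipticMap k (z₁ + t * (z₂ - z₁))).re)
        (c * (1 / ellipticBranch k (z₁ + t * (z₂ - z₁)))).re t := fun t ht => by
    have h1 : HasDerivAt (fun t : ℝ => z₁ + (t : ℂ) * (z₂ - z₁)) (z₂ - z₁) t := by
      simpa using ((Complex.ofRealCLM.hasDerivAt (x := t)).mul_const (z₂ - z₁)).const_add z₁
    have h2 := ((hasDerivAt_ellipticMap hk hk1 (hCu (hmem t ht))).comp t h1).const_mul
      (c / (z₂ - z₁))
    refine (Complex.reCLM.hasFDerivAt.comp_hasDerivAt t h2).congr_deriv ?_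
    simp only [Complex.reCLM_apply]
    congr 1
    field_simp
  obtain ⟨t, ht, h0⟩ := exists_hasDerivAt_eq_zero zero_lt_one
    (fun t ht => (hderiv t ht).continuousAt.continuousWithinAt) (by simp [heq])
    (fun t ht => hderiv t (Set.Ioo_subset_Icc_self ht))
  exact hc _ (hmem t (Set.Ioo_subset_Icc_self ht)) h0

lemma injOn_ellipticMap {k : ℝ} (hk : 0 < k) (hk1 : k < 1) :
    Set.InjOn (ellipticMap k) {z : ℂ | 0 < z.im} := by
  have hre : ∀ z : ℂ, 0 < z.im → z.re ≠ 0 → (Complex.I * (1 / ellipticBranch k z)).re ≠ 0 :=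
    fun z hz h => by
      have h1 := ellipticBranch_im_ne_zero hk hk1 hz h
      have h2 := ellipticBranch_ne_zero hk hz
      simpa [Complex.inv_im, h2] using h1
  have hcu : Convex ℝ {z : ℂ | 0 < z.im} := convex_halfSpace_im_gt 0
  intro z₁ h₁ z₂ h₂ heq
  have s₁ : 0 < z₁.im := h₁
  have s₂ : 0 < z₂.im := h₂
  have hre_eq := congrArg Complex.re heq
  rcases lt_trichotomy z₁.re 0 with h | h | h
  · have hn := ellipticMap_re_neg hk hk1 s₁ h
    have h' : z₂.re < 0 := by
      by_contra! hcon
      rcases hcon.eq_or_lt with h' | h'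
      · linarith [ellipticMap_re_eq_zero hk hk1 s₂.le h'.symm]
      · linarith [ellipticMap_re_pos hk hk1 s₂ h']
    exact injOn_ellipticMap_of_convex hk hk1 (hcu.inter (convex_halfSpace_re_lt 0))
      Set.inter_subset_left (fun z hz => hre z hz.1 (ne_of_lt hz.2)) ⟨h₁, h⟩ ⟨h₂, h'⟩ heq
  · have hn := ellipticMap_re_eq_zero hk hk1 s₁.le h
    have h' : z₂.re = 0 := by
      by_contra hcon
      rcases lt_or_gt_of_ne hcon with h' | h'
      · linarith [ellipticMap_re_neg hk hk1 s₂ h']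
      · linarith [ellipticMap_re_pos hk hk1 s₂ h']
    refine injOn_ellipticMap_of_convex hk hk1 (c := 1)
      (hcu.inter ((convex_singleton (0 : ℝ)).is_linear_preimage Complex.reLm.isLinear))
      Set.inter_subset_left (fun z hz => ?_) ⟨h₁, h⟩ ⟨h₂, h'⟩ heq
    have h1 := ellipticBranch_re_ne_zero hk (show 0 < z.im from hz.1) hz.2
    have h2 := ellipticBranch_ne_zero hk (show 0 < z.im from hz.1)
    simpa [Complex.inv_re, h2] using h1
  · have hn := ellipticMap_re_pos hk hk1 s₁ h
    have h' : 0 < z₂.re := by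
      by_contra! hcon
      rcases hcon.eq_or_lt with h' | h'
      · linarith [ellipticMap_re_eq_zero hk hk1 s₂.le h']
      · linarith [ellipticMap_re_neg hk hk1 s₂ h']
    exact injOn_ellipticMap_of_convex hk hk1 (hcu.inter (convex_halfSpace_re_gt 0))
      Set.inter_subset_left (fun z hz => hre z hz.1 (ne_of_gt hz.2)) ⟨h₁, h⟩ ⟨h₂, h'⟩ heq

lemma convex_ellipticRectangle (k : ℝ) : Convex ℝ (ellipticRectangle k) :=
  (convex_halfSpace_re_gt _).inter ((convex_halfSpace_re_lt _).inter
    ((convex_halfSpace_im_gt _).inter (convex_halfSpace_im_lt _)))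

lemma image_ellipticMap {k : ℝ} (hk : 0 < k) (hk1 : k < 1) :
    ellipticMap k '' {z : ℂ | 0 < z.im} = ellipticRectangle k := by
  have hsub : ellipticMap k '' {z : ℂ | 0 < z.im} ⊆ ellipticRectangle k := by
    rintro _ ⟨z, hz, rfl⟩
    exact ellipticMap_mem_ellipticRectangle hk hk1 hz
  have hI : Complex.I ∈ {z : ℂ | 0 < z.im} := by simp
  refine hsub.antisymm ((convex_ellipticRectangle k).isPreconnected.subset_of_closure_inter_subset
    ?_ ⟨_, hsub ⟨_, hI, rfl⟩, _, hI, rfl⟩ ?_)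
  · rw [isOpen_iff_mem_nhds]
    rintro _ ⟨z, hz, rfl⟩
    rw [← map_nhds_ellipticMap hk hk1 hz]
    exact image_mem_map (isOpen_upper.mem_nhds hz)
  rintro w ⟨hw, hwR⟩
  have hinf : 0 < ‖(ellipticK (1 - k ^ 2) : ℂ) * Complex.I - w‖ := by
    refine norm_pos_iff.2 (sub_ne_zero.2 fun h => ?_)
    have := hwR.2.2.2
    rw [← h] at this
    simp at this
  have hcont : ContinuousOn (fun z => ‖ellipticMap k z - w‖) {z : ℂ | 0 ≤ z.im} :=
    ((continuousOn_ellipticMap hk hk1).sub continuousOn_const).norm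
  have hlim : Tendsto (fun z => ‖ellipticMap k z - w‖) (cocompact ℂ ⊓ 𝓟 {z : ℂ | 0 ≤ z.im})
      (𝓝 ‖(ellipticK (1 - k ^ 2) : ℂ) * Complex.I - w‖) :=
    ((tendsto_ellipticMap_cocompact hk hk1).sub_const w).norm
  have happrox : ∀ ε > 0, ∃ z : ℂ, 0 < z.im ∧ ‖ellipticMap k z - w‖ < ε := fun ε hε => by
    obtain ⟨_, ⟨z, hz, rfl⟩, hd⟩ := Metric.mem_closure_iff.1 hw ε hε
    exact ⟨z, hz, by rwa [dist_comm, dist_eq_norm] at hd⟩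
  obtain ⟨z₀, hz₀, hlt⟩ := happrox _ hinf
  obtain ⟨z₁, hz₁, hmin⟩ := hcont.exists_isMinOn'
    (isClosed_le continuous_const Complex.continuous_im)
    (show z₀ ∈ {z : ℂ | 0 ≤ z.im} from hz₀.le)
    ((hlim.eventually_const_lt hlt).mono fun _ h => h.le)
  have hzero : ellipticMap k z₁ = w := by
    by_contra hne
    obtain ⟨z₂, hz₂, hlt₂⟩ := happrox _ (norm_pos_iff.2 (sub_ne_zero.2 hne))
    exact absurd (hmin (show z₂ ∈ {z : ℂ | 0 ≤ z.im} from hz₂.le)) (not_le.2 hlt₂)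
  by_contra hn
  have hz₁u : z₁ ∉ {z : ℂ | 0 < z.im} := fun h => hn ⟨z₁, h, hzero⟩
  have hb := (ellipticMap_ofReal_mem hk hk1 z₁.re).2
  rw [← eq_ofReal_of_mem_diff ⟨hz₁, hz₁u⟩, hzero] at hb
  obtain ⟨h1, h2, h3, h4⟩ := hwR
  rcases hb with h | h | h | h <;> linarith

end SchwarzChristoffel

/-- The Schwarz–Christoffel map onto a rectangle: fix `k ∈ (0,1)` and let `q` be the
branch of `√((1−z²)(1−k²z²))` on the closed upper half-plane which is positive on
`(−1,1)` (continuous off the four real singular points, holomorphic on the open upper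
half-plane). Then `ψ(z) = ∫₀^z dt/q(t)` (integrated along segments in the closed
upper half-plane) is continuous on the closed upper half-plane, holomorphic and
injective on `ℍ`, maps `ℍ` onto the open rectangle with corners `±K(k²)` and
`±K(k²) + iK(1−k²)`, and sends `−1/k, −1, 1, 1/k` to the four corners. -/
theorem schwarz_christoffel_rectangle (k : ℝ) (hk : k ∈ Set.Ioo (0 : ℝ) 1)
    (q : ℂ → ℂ)
    (hqc : ContinuousOn q ({z : ℂ | 0 ≤ z.im} \ {1, -1, (1 : ℂ) / k, -(1 : ℂ) / k}))
    (hqd : ∀ z : ℂ, 0 < z.im → DifferentiableAt ℂ q z)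
    (hqsq : ∀ z : ℂ, 0 ≤ z.im → (q z) ^ 2 = (1 - z ^ 2) * (1 - (k : ℂ) ^ 2 * z ^ 2))
    (hqpos : ∀ x : ℝ, -1 < x → x < 1 →
      q (x : ℂ) = ((Real.sqrt ((1 - x ^ 2) * (1 - k ^ 2 * x ^ 2)) : ℝ) : ℂ))
    (ψ : ℂ → ℂ) (hψ : ψ = fun z => ∫ s in (0 : ℝ)..1, z / q ((s : ℂ) * z)) :
    ContinuousOn ψ {z : ℂ | 0 ≤ z.im} ∧
    DifferentiableOn ℂ ψ {z : ℂ | 0 < z.im} ∧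
    Set.InjOn ψ {z : ℂ | 0 < z.im} ∧
    ψ '' {z : ℂ | 0 < z.im} =
      {w : ℂ | -ellipticK (k ^ 2) < w.re ∧ w.re < ellipticK (k ^ 2) ∧
        0 < w.im ∧ w.im < ellipticK (1 - k ^ 2)} ∧
    ψ (-(1 : ℂ) / k) = -(ellipticK (k ^ 2) : ℂ) + (ellipticK (1 - k ^ 2) : ℂ) * Complex.I ∧
    ψ (-1) = -(ellipticK (k ^ 2) : ℂ) ∧
    ψ 1 = (ellipticK (k ^ 2) : ℂ) ∧
    ψ ((1 : ℂ) / k) = (ellipticK (k ^ 2) : ℂ) + (ellipticK (1 - k ^ 2) : ℂ) * Complex.I := by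
  obtain ⟨hk0, hk1⟩ := hk
  have h0 : q 0 = SchwarzChristoffel.ellipticBranch k 0 := by
    have h1 := hqpos 0 (by norm_num) one_pos
    have h2 := SchwarzChristoffel.ellipticBranch_ofReal_of_mem_Icc_zero_one hk0 hk1 le_rfl
      zero_le_one
    rw [Complex.ofReal_zero] at h1 h2
    rw [h1, h2]
    norm_num
  have hq : ∀ z : ℂ, 0 ≤ z.im → q z = SchwarzChristoffel.ellipticBranch k z := fun z hz =>
    SchwarzChristoffel.eq_of_sq_eq_of_eq_zero hk0 hqc
      (SchwarzChristoffel.continuous_ellipticBranch k).continuousOn hqsq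
      (fun _ h => SchwarzChristoffel.ellipticBranch_sq hk0 h) h0 hz
  have hψq : Set.EqOn ψ (SchwarzChristoffel.ellipticMap k) {z : ℂ | 0 ≤ z.im} := by
    intro z hz
    rw [hψ]
    refine intervalIntegral.integral_congr fun s hs => ?_
    rw [Set.uIcc_of_le zero_le_one] at hs
    have him : 0 ≤ ((s : ℂ) * z).im := by simpa using mul_nonneg hs.1 hz
    exact congrArg (z / ·) (hq _ him)
  have hsub : {z : ℂ | 0 < z.im} ⊆ {z : ℂ | 0 ≤ z.im} := fun z hz =>
    (show 0 < z.im from hz).le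
  refine ⟨(SchwarzChristoffel.continuousOn_ellipticMap hk0 hk1).congr hψq, ?_,
    (SchwarzChristoffel.injOn_ellipticMap hk0 hk1).congr (hψq.mono hsub).symm, ?_, ?_, ?_, ?_, ?_⟩
  · refine DifferentiableOn.congr (fun z hz => ?_) (hψq.mono hsub)
    exact (SchwarzChristoffel.hasDerivAt_ellipticMap hk0 hk1
      hz).differentiableAt.differentiableWithinAt
  · rw [(hψq.mono hsub).image_eq]
    exact SchwarzChristoffel.image_ellipticMap hk0 hk1
  · rw [hψq (by simp [Complex.div_im])]
    exact SchwarzChristoffel.ellipticMap_neg_one_div hk0 hk1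
  · rw [hψq (by simp)]
    exact SchwarzChristoffel.ellipticMap_neg_one hk0 hk1
  · rw [hψq (by simp)]
    exact SchwarzChristoffel.ellipticMap_one hk0 hk1
  · rw [hψq (by simp)]
    exact SchwarzChristoffel.ellipticMap_one_div hk0 hk1
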